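/- arXiv:2401.07153 — 9 statements merged into one kernel-verified Lean document; each statement's English description precedes it below -/
import Mathlib

section
/- There exist a transmit position set D_tx = {0,1,2} and two receive position sets D_rx^I = {0,1,2,5} and D_rx^II = {0,1,3,5} (subsets of the natural numbers) whose sumsets satisfy D_tx + D_rx^I = D_tx + D_rx^II = {0,1,2,3,4,5,6,7}, such that with the associated redundancy patterns Υ_I and Υ_II the following holds for every V ≥ 8 and every 8×V complex Vandermonde matrix A with A[ℓ,i] = z_i^(ℓ-1) built from pairwise distinct complex numbers z_1,…,z_V: (i) for every matrix S ∈ ℂ^{2×3}, there exists a set of 8 columns of B_I = (S ⊗ I_4) Υ_I A that is linearly dependent (so the Kruskal rank of B_I is strictly less than 8); (ii) there exists a matrix S ∈ ℂ^{2×3} of rank 2 such that every set of 8 columns of B_II = (S ⊗ I_4) Υ_II A is linearly independent (so the Kruskal rank of B_II equals 8). -/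
open Matrix Kronecker Pointwise

/-- Transmit positions of both arrays: {0,1,2}. -/
def dtx : Fin 3 → ℕ := ![0, 1, 2]

/-- Receive positions of Array I: {0,1,2,5}. -/
def drxI : Fin 4 → ℕ := ![0, 1, 2, 5]

/-- Receive positions of Array II: {0,1,3,5}. -/
def drxII : Fin 4 → ℕ := ![0, 1, 3, 5]

/-- Redundancy pattern of Array I: row (n, m), column ℓ is 1 iff dtx n + drxI m = ℓ. -/
noncomputable def UpsilonI : Matrix (Fin 3 × Fin 4) (Fin 8) ℂ :=
  fun p ℓ => if dtx p.1 + drxI p.2 = (ℓ : ℕ) then 1 else 0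

/-- Redundancy pattern of Array II: row (n, m), column ℓ is 1 iff dtx n + drxII m = ℓ. -/
noncomputable def UpsilonII : Matrix (Fin 3 × Fin 4) (Fin 8) ℂ :=
  fun p ℓ => if dtx p.1 + drxII p.2 = (ℓ : ℕ) then 1 else 0

/-- As many vectors `M *ᵥ v i` as `M` has rows are dependent if some nonzero vector
annihilates `M` from the left. -/
theorem not_linearIndependent_of_vecMul_eq_zero {K m n ι : Type*} [Field K] [Fintype m]
    [Fintype n] [Fintype ι] (hcard : Fintype.card ι = Fintype.card m) (M : Matrix m n K)
    {w : m → K} (hw : w ≠ 0) (hM : w ᵥ* M = 0) (v : ι → n → K) :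
    ¬ LinearIndependent K (fun i => M *ᵥ v i) := by
  classical
  intro h
  have hspan := h.span_eq_top_of_card_eq_finrank' (by simpa using hcard)
  apply hw
  rw [← dotProduct_eq_zero_iff]
  intro x
  have hx : x ∈ Submodule.span K (Set.range fun i => M *ᵥ v i) := hspan ▸ Submodule.mem_top
  induction hx using Submodule.span_induction with
  | mem x hx =>
    obtain ⟨i, rfl⟩ := hx
    simp [dotProduct_mulVec, hM]
  | zero => simp
  | add x y _ _ hx hy => simp [dotProduct_add, hx, hy]
  | smul a x _ hx => simp [dotProduct_smul, hx]

/-- Any `n` vectors of powers `(z ^ 0, …, z ^ (n - 1))` with distinct nodes are independent. -/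
theorem linearIndependent_pow_of_injective {K ι : Type*} [Field K] [Fintype ι] {n : ℕ}
    (hcard : Fintype.card ι = n) {z : ι → K} (hz : Function.Injective z) :
    LinearIndependent K (fun i => fun ℓ : Fin n => z i ^ (ℓ : ℕ)) := by
  let e : Fin n ≃ ι := (Fintype.equivFinOfCardEq hcard).symm
  rw [← linearIndependent_equiv e]
  have hdet : (vandermonde (z ∘ e)).det ≠ 0 :=
    det_vandermonde_ne_zero_iff.mpr (hz.comp e.injective)
  exact linearIndependent_rows_of_det_ne_zero hdet

/-- The polynomial identity `p q - q p = 0` for the two rows `p`, `q` of `S` gives a row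
dependency of the compressed redundancy pattern of Array I. -/
theorem exists_vecMul_UpsilonI_eq_zero (S : Matrix (Fin 2) (Fin 3) ℂ) :
    ∃ w : Fin 2 × Fin 4 → ℂ, w ≠ 0 ∧
      w ᵥ* ((S ⊗ₖ (1 : Matrix (Fin 4) (Fin 4) ℂ)) * UpsilonI) = 0 := by
  by_cases hS : S = 0
  · exact ⟨1, one_ne_zero, by simp [hS]⟩
  · let W : Matrix (Fin 2) (Fin 4) ℂ :=
      !![S 1 0, S 1 1, S 1 2, 0; -S 0 0, -S 0 1, -S 0 2, 0]
    refine ⟨fun p => W p.1 p.2, fun h => hS ?_, ?_⟩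
    · have h' (a : Fin 2) (m : Fin 4) : W a m = 0 := congrFun h (a, m)
      have h00 := h' 1 0
      have h01 := h' 1 1
      have h02 := h' 1 2
      have h10 := h' 0 0
      have h11 := h' 0 1
      have h12 := h' 0 2
      simp [W] at h00 h01 h02 h10 h11 h12
      ext a n
      fin_cases a <;> fin_cases n <;> simpa
    · ext ℓ
      fin_cases ℓ <;>
        simp [W, vecMul, dotProduct, Matrix.mul_apply, Fintype.sum_prod_type, Fin.sum_univ_succ,
          UpsilonI, dtx, drxI, one_apply] <;> ring

/-- Selects the polynomials `1 + x ^ 2` and `x`. -/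
def selectionII : Matrix (Fin 2) (Fin 3) ℂ := !![1, 0, 1; 0, 1, 0]

theorem rank_selectionII : selectionII.rank = 2 := by
  have h : LinearIndependent ℂ selectionII.row := by
    rw [Fintype.linearIndependent_iff]
    intro g hg i
    have h0 := congrFun hg 0
    have h1 := congrFun hg 1
    simp [selectionII, Fin.sum_univ_succ] at h0 h1
    fin_cases i <;> simpa
  simpa using h.rank_matrix

theorem mulVec_selectionII_injective :
    Function.Injective
      ((selectionII ⊗ₖ (1 : Matrix (Fin 4) (Fin 4) ℂ)) * UpsilonII).mulVec := by
  rw [← coe_mulVecLin, injective_iff_map_eq_zero]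
  intro v hv
  have h (a : Fin 2) (m : Fin 4) := congrFun hv (a, m)
  have h00 := h 0 0
  have h01 := h 0 1
  have h02 := h 0 2
  have h03 := h 0 3
  have h10 := h 1 0
  have h11 := h 1 1
  have h12 := h 1 2
  have h13 := h 1 3
  simp [mulVec, dotProduct, Fintype.sum_prod_type, Fin.sum_univ_succ,
    UpsilonII, dtx, drxII, one_apply, selectionII] at h00 h01 h02 h03 h10 h11 h12 h13
  ext ℓ
  fin_cases ℓ <;> simp <;> grind

theorem stmt0 :
    -- the sum co-arrays of both arrays coincide and equal {0,1,…,7}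
    (({0, 1, 2} : Finset ℕ) + ({0, 1, 2, 5} : Finset ℕ) = Finset.range 8) ∧
    (({0, 1, 2} : Finset ℕ) + ({0, 1, 3, 5} : Finset ℕ) = Finset.range 8) ∧
    ∀ (V : ℕ), 8 ≤ V → ∀ (z : Fin V → ℂ), Function.Injective z →
      ∀ (A : Matrix (Fin 8) (Fin V) ℂ), (∀ (ℓ : Fin 8) (i : Fin V), A ℓ i = z i ^ (ℓ : ℕ)) →
        -- (i) for every S, some 8 columns of B_I are linearly dependent
        ((∀ S : Matrix (Fin 2) (Fin 3) ℂ,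
            ∃ s : Finset (Fin V), s.card = 8 ∧
              ¬ LinearIndependent ℂ
                (fun i : s => ((S ⊗ₖ (1 : Matrix (Fin 4) (Fin 4) ℂ)) * UpsilonI * A)ᵀ (i : Fin V))) ∧
        -- (ii) there is a rank-2 S such that every 8 columns of B_II are linearly independent
         (∃ S : Matrix (Fin 2) (Fin 3) ℂ, S.rank = 2 ∧
            ∀ s : Finset (Fin V), s.card = 8 →
              LinearIndependent ℂ
                (fun i : s => ((S ⊗ₖ (1 : Matrix (Fin 4) (Fin 4) ℂ)) * UpsilonII * A)ᵀ (i : Fin V)))) := by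
  refine ⟨by decide, by decide, fun V hV z hz A hA => ⟨fun S => ?_, selectionII,
    rank_selectionII, fun s hs => ?_⟩⟩
  · obtain ⟨s, -, hs⟩ := Finset.exists_subset_card_eq
      (s := (Finset.univ : Finset (Fin V))) (n := 8) (by simpa using hV)
    obtain ⟨w, hw, hwM⟩ := exists_vecMul_UpsilonI_eq_zero S
    exact ⟨s, hs, not_linearIndependent_of_vecMul_eq_zero (by simp [hs]) _ hw hwM
      fun i : s => Aᵀ i⟩
  · have hcols : LinearIndependent ℂ (fun i : s => Aᵀ (i : Fin V)) := by
      have hA' : (fun i : s => Aᵀ (i : Fin V)) =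
          fun (i : s) (ℓ : Fin 8) => (z ∘ Subtype.val) i ^ (ℓ : ℕ) := by
        ext i ℓ
        exact hA ℓ i
      rw [hA']
      exact linearIndependent_pow_of_injective (by simpa using hs)
        (hz.comp Subtype.val_injective)
    exact hcols.map' (mulVecLin _) (LinearMap.ker_eq_bot.mpr mulVec_selectionII_injective)
end

section
/- Let S ∈ ℂ^{T×N_tx}, let Υ ∈ ℂ^{N_tx N_rx × N_Σ} be a 0/1 matrix in which every row has exactly one entry equal to 1 and every column has at least one entry equal to 1, let A ∈ ℂ^{N_Σ×V} with V ≥ N_Σ, and set B = (S ⊗ I_{N_rx}) Υ A. Assume N_rx · rank(S) ≥ N_Σ. Then every set of N_Σ columns of B is linearly independent if and only if every set of N_Σ columns of A is linearly independent and rank((S ⊗ I_{N_rx}) Υ) = N_Σ. -/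
open Matrix Kronecker

/-- The columns of `W * A` are the images of the columns of `A` under `W`. -/
theorem Matrix.transpose_mul_apply_eq_mulVecLin {K m n p : Type*} [CommSemiring K] [Fintype n]
    (W : Matrix m n K) (A : Matrix n p K) (i : p) :
    (W * A)ᵀ i = W.mulVecLin (Aᵀ i) := by
  ext j
  simp [Matrix.mul_apply, Matrix.mulVec, dotProduct]

/-- A matrix of full column rank acts injectively. -/
theorem Matrix.ker_mulVecLin_eq_bot_of_rank_eq_card {K m n : Type*} [Field K] [Fintype n]
    (W : Matrix m n K) (hW : W.rank = Fintype.card n) : LinearMap.ker W.mulVecLin = ⊥ := by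
  have h := W.mulVecLin.finrank_range_add_finrank_ker
  rw [Module.finrank_fintype_fun_eq_card, ← hW, Matrix.rank] at h
  exact Submodule.finrank_eq_zero.mp (by omega)

/-- If the images under `W` of a family of as many vectors as `W` has columns are linearly
independent, then `W` has full column rank. -/
theorem Matrix.rank_eq_card_of_linearIndependent_mulVecLin {K m n ι : Type*} [Field K]
    [Fintype n] [Fintype ι] (W : Matrix m n K) (v : ι → n → K)
    (hv : LinearIndependent K (fun i => W.mulVecLin (v i)))
    (hcard : Fintype.card ι = Fintype.card n) : W.rank = Fintype.card n := by
  refine le_antisymm W.rank_le_card_width ?_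
  rw [← hcard, ← finrank_span_eq_card hv, Matrix.rank]
  refine Submodule.finrank_mono (Submodule.span_le.mpr ?_)
  rintro _ ⟨i, rfl⟩
  exact LinearMap.mem_range_self _ _

theorem stmt1 (T Ntx Nrx Nsum V : ℕ)
    (S : Matrix (Fin T) (Fin Ntx) ℂ)
    (Υ : Matrix (Fin Ntx × Fin Nrx) (Fin Nsum) ℂ)
    (hΥ01 : ∀ r ℓ, Υ r ℓ = 0 ∨ Υ r ℓ = 1)
    (hrow : ∀ r, ∃! ℓ, Υ r ℓ = 1)
    (hcol : ∀ ℓ, ∃ r, Υ r ℓ = 1)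
    (A : Matrix (Fin Nsum) (Fin V) ℂ)
    (hV : Nsum ≤ V)
    (hwr : Nsum ≤ Nrx * S.rank)
    (B : Matrix (Fin T × Fin Nrx) (Fin V) ℂ)
    (hB : B = (S ⊗ₖ (1 : Matrix (Fin Nrx) (Fin Nrx) ℂ)) * Υ * A) :
    (∀ s : Finset (Fin V), s.card = Nsum →
        LinearIndependent ℂ (fun i : s => Bᵀ (i : Fin V))) ↔
      ((∀ s : Finset (Fin V), s.card = Nsum →
          LinearIndependent ℂ (fun i : s => Aᵀ (i : Fin V))) ∧
        ((S ⊗ₖ (1 : Matrix (Fin Nrx) (Fin Nrx) ℂ)) * Υ).rank = Nsum) := by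
  subst hB
  simp only [Matrix.transpose_mul_apply_eq_mulVecLin]
  constructor
  · intro h
    refine ⟨fun s hs => LinearIndependent.of_comp _ (h s hs), ?_⟩
    obtain ⟨s, -, hs⟩ := Finset.exists_subset_card_eq
      (s := (Finset.univ : Finset (Fin V))) (n := Nsum) (by simpa using hV)
    simpa using Matrix.rank_eq_card_of_linearIndependent_mulVecLin _ _ (h s hs) (by simpa using hs)
  · rintro ⟨hA, hrank⟩ s hs
    exact (hA s hs).map' _
      (Matrix.ker_mulVecLin_eq_bot_of_rank_eq_card _ (by simpa using hrank))
end

section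
/- Let Υ_I be the 12×8 0/1 matrix defined by Υ_I[(n−1)·4+m, ℓ] = 1 if d_tx[n] + d_rx[m] = ℓ−1 and 0 otherwise, where (d_tx[1],d_tx[2],d_tx[3]) = (0,1,2) and (d_rx[1],d_rx[2],d_rx[3],d_rx[4]) = (0,1,2,5). Then for every matrix S ∈ ℂ^{2×3}, the last three columns (columns 6, 7, 8) of the 8×8 matrix W_I = (S ⊗ I_4) Υ_I are linearly dependent; in particular rank(W_I) < 8. -/
open Matrix Kronecker

/-- Only the receiver at position `5` contributes to the virtual sensors `5`, `6`, `7`, so the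
corresponding columns are those of `S`, placed in the rows of that receiver. -/
theorem kronecker_one_mul_UpsilonI_apply_natAdd {ι : Type*} (S : Matrix ι (Fin 3) ℂ)
    (k : Fin 3) (p : ι × Fin 4) :
    ((S ⊗ₖ (1 : Matrix (Fin 4) (Fin 4) ℂ)) * UpsilonI) p (Fin.natAdd 5 k) =
      if p.2 = 3 then S p.1 k else 0 := by
  obtain ⟨i, m⟩ := p
  fin_cases k <;> fin_cases m <;>
    simp [Matrix.mul_apply, Fintype.sum_prod_type, Fin.sum_univ_succ, UpsilonI, dtx, drxI,
      Matrix.one_apply]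

/-- The last three columns are linearly dependent: they are images of three vectors of `ℂ²`. -/
theorem not_linearIndependent_last_columns (S : Matrix (Fin 2) (Fin 3) ℂ) :
    ¬ LinearIndependent ℂ (fun k : Fin 3 =>
      ((S ⊗ₖ (1 : Matrix (Fin 4) (Fin 4) ℂ)) * UpsilonI)ᵀ (Fin.natAdd 5 k)) := by
  intro h
  let L : (Fin 2 → ℂ) →ₗ[ℂ] (Fin 2 × Fin 4 → ℂ) :=
    LinearMap.pi fun p => if p.2 = 3 then LinearMap.proj p.1 else 0
  have hL : (fun k : Fin 3 => ((S ⊗ₖ (1 : Matrix (Fin 4) (Fin 4) ℂ)) * UpsilonI)ᵀ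
      (Fin.natAdd 5 k)) = L ∘ fun k => Sᵀ k := by
    ext k p
    rw [Matrix.transpose_apply, kronecker_one_mul_UpsilonI_apply_natAdd]
    by_cases hp : p.2 = 3 <;> simp [L, hp]
  rw [hL] at h
  simpa using (h.of_comp L).fintype_card_le_finrank

theorem stmt7 (S : Matrix (Fin 2) (Fin 3) ℂ) :
    ¬ LinearIndependent ℂ
        ![((S ⊗ₖ (1 : Matrix (Fin 4) (Fin 4) ℂ)) * UpsilonI)ᵀ 5,
          ((S ⊗ₖ (1 : Matrix (Fin 4) (Fin 4) ℂ)) * UpsilonI)ᵀ 6,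
          ((S ⊗ₖ (1 : Matrix (Fin 4) (Fin 4) ℂ)) * UpsilonI)ᵀ 7] ∧
    ((S ⊗ₖ (1 : Matrix (Fin 4) (Fin 4) ℂ)) * UpsilonI).rank < 8 := by
  constructor
  · convert not_linearIndependent_last_columns S using 2
    ext k : 1
    fin_cases k <;> rfl
  · refine lt_of_le_of_ne ((Matrix.rank_le_card_width _).trans_eq (Fintype.card_fin 8))
      fun hrank => ?_
    rw [Matrix.rank_eq_finrank_span_cols] at hrank
    have hcols := linearIndependent_iff_card_eq_finrank_span.mpr
      ((Fintype.card_fin 8).trans hrank.symm)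
    exact not_linearIndependent_last_columns S (hcols.comp _ (Fin.natAdd_injective 3 5))
end

section
/- Let Υ_II be the 12×8 0/1 matrix defined by Υ_II[(n−1)·4+m, ℓ] = 1 if d_tx[n] + d_rx[m] = ℓ−1 and 0 otherwise, where (d_tx[1],d_tx[2],d_tx[3]) = (0,1,2) and (d_rx[1],d_rx[2],d_rx[3],d_rx[4]) = (0,1,3,5). Let S₀ ∈ ℂ^{2×3} be the matrix with rows (1,0,1) and (0,1,0). Then rank(S₀) = 2 and the 8×8 matrix W_II = (S₀ ⊗ I_4) Υ_II has rank 8 (equivalently, W_II is invertible). -/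
open Matrix Kronecker

/-- The rank-2 waveform matrix with rows (1,0,1) and (0,1,0). -/
noncomputable def S₀ : Matrix (Fin 2) (Fin 3) ℂ := !![1, 0, 1; 0, 1, 0]

/-- A matrix whose kernel is trivial has full column rank. -/
theorem Matrix.rank_eq_card_of_mulVec_eq_zero {m n K : Type*} [Fintype m] [Fintype n] [Field K]
    (A : Matrix m n K) (h : ∀ v, A *ᵥ v = 0 → v = 0) : A.rank = Fintype.card n := by
  have hA : LinearIndependent K A.col :=
    mulVec_injective_iff.mp ((injective_iff_map_eq_zero A.mulVecLin).mpr h)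
  rw [← rank_transpose]
  exact LinearIndependent.rank_matrix hA

theorem rank_S₀ : S₀.rank = 2 := by
  rw [← rank_transpose]
  refine rank_eq_card_of_mulVec_eq_zero _ fun v hv => ?_
  have h0 := congrFun hv 0
  have h1 := congrFun hv 1
  simp [S₀, mulVec, dotProduct, Fin.sum_univ_succ] at h0 h1
  ext i
  fin_cases i <;> simp [h0, h1]

/-- The first block of rows of `(S₀ ⊗ₖ 1) * UpsilonII` adds the rows of the first and third
transmitters. -/
theorem kronecker_mul_UpsilonII_zero (m : Fin 4) (l : Fin 8) :
    ((S₀ ⊗ₖ (1 : Matrix (Fin 4) (Fin 4) ℂ)) * UpsilonII) (0, m) l =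
      UpsilonII (0, m) l + UpsilonII (2, m) l := by
  simp [mul_apply, Fintype.sum_prod_type, Fin.sum_univ_three, S₀, one_apply]

/-- The second block of rows of `(S₀ ⊗ₖ 1) * UpsilonII` consists of the rows of the second
transmitter. -/
theorem kronecker_mul_UpsilonII_one (m : Fin 4) (l : Fin 8) :
    ((S₀ ⊗ₖ (1 : Matrix (Fin 4) (Fin 4) ℂ)) * UpsilonII) (1, m) l = UpsilonII (1, m) l := by
  simp [mul_apply, Fintype.sum_prod_type, Fin.sum_univ_three, S₀, one_apply]

theorem rank_kronecker_mul_UpsilonII :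
    ((S₀ ⊗ₖ (1 : Matrix (Fin 4) (Fin 4) ℂ)) * UpsilonII).rank = 8 := by
  refine rank_eq_card_of_mulVec_eq_zero _ fun v hv => ?_
  have hzero (m : Fin 4) := congrFun hv (0, m)
  have hone (m : Fin 4) := congrFun hv (1, m)
  simp only [mulVec, dotProduct, kronecker_mul_UpsilonII_zero, kronecker_mul_UpsilonII_one,
    Pi.zero_apply] at hzero hone
  simp [Fin.forall_fin_succ, Fin.sum_univ_succ, UpsilonII, dtx, drxII] at hzero hone
  ext i
  fin_cases i <;> simp <;> grind

theorem stmt8 :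
    S₀.rank = 2 ∧ ((S₀ ⊗ₖ (1 : Matrix (Fin 4) (Fin 4) ℂ)) * UpsilonII).rank = 8 := by
  exact ⟨rank_S₀, rank_kronecker_mul_UpsilonII⟩
end

section
/- Let Υ_I be the 12×8 0/1 matrix defined by Υ_I[(n−1)·4+m, ℓ] = 1 if d_tx[n] + d_rx[m] = ℓ−1 and 0 otherwise, where (d_tx[1],d_tx[2],d_tx[3]) = (0,1,2) and (d_rx[1],d_rx[2],d_rx[3],d_rx[4]) = (0,1,2,5). Then for every S ∈ ℂ^{2×3}, every A ∈ ℂ^{8×V}, and every set of 8 column indices, the corresponding 8 columns of B_I = (S ⊗ I_4) Υ_I A are linearly dependent; in particular the Kruskal rank of B_I is strictly less than 8 whenever V ≥ 8. -/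
open Matrix Kronecker

/-- A matrix that kills a nonzero vector does not have full column rank. -/
theorem Matrix.rank_lt_card_of_mulVec_eq_zero {K m n : Type*} [Field K] [Fintype n]
    {M : Matrix m n K} {x : n → K} (hx : x ≠ 0) (hMx : M *ᵥ x = 0) :
    M.rank < Fintype.card n := by
  have hker : 0 < Module.finrank K (LinearMap.ker M.mulVecLin) :=
    Module.finrank_pos_iff_exists_ne_zero.mpr
      ⟨⟨x, by simpa using hMx⟩, fun h => hx (congrArg Subtype.val h)⟩
  have hsum := M.mulVecLin.finrank_range_add_finrank_ker
  rw [Module.finrank_pi] at hsum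
  rw [Matrix.rank]
  omega

/-- Extending a kernel vector of `S` by zeros in the first five coordinates gives a kernel vector
of `(S ⊗ₖ 1) * UpsilonI`, because only the last receiver contributes to the last three columns. -/
theorem kronecker_mul_UpsilonI_mulVec_eq_zero {S : Matrix (Fin 2) (Fin 3) ℂ} {v : Fin 3 → ℂ}
    (hv : S *ᵥ v = 0) :
    ((S ⊗ₖ (1 : Matrix (Fin 4) (Fin 4) ℂ)) * UpsilonI) *ᵥ
      ![0, 0, 0, 0, 0, v 0, v 1, v 2] = 0 := by
  have hΥ (n : Fin 3) (m : Fin 4) :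
      (UpsilonI *ᵥ ![0, 0, 0, 0, 0, v 0, v 1, v 2]) (n, m) = if m = 3 then v n else 0 := by
    fin_cases n <;> fin_cases m <;>
      simp [Matrix.mulVec, dotProduct, Fin.sum_univ_eight, UpsilonI, dtx, drxI]
  ext ⟨k, m⟩
  have hk : ∑ n, S k n * v n = 0 := congrFun hv k
  rw [← Matrix.mulVec_mulVec, Matrix.mulVec, dotProduct, Fintype.sum_prod_type]
  by_cases hm : m = 3 <;> simp [hΥ, Matrix.one_apply, hm, hk]

theorem rank_kronecker_mul_UpsilonI_lt (S : Matrix (Fin 2) (Fin 3) ℂ) :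
    ((S ⊗ₖ (1 : Matrix (Fin 4) (Fin 4) ℂ)) * UpsilonI).rank < 8 := by
  obtain ⟨v, hv, hv0⟩ := (Submodule.ne_bot_iff _).mp
    (LinearMap.ker_ne_bot_of_finrank_lt (f := S.mulVecLin) (by simp))
  refine Matrix.rank_lt_card_of_mulVec_eq_zero (fun h => hv0 ?_)
    (kronecker_mul_UpsilonI_mulVec_eq_zero (by simpa using hv))
  ext n
  fin_cases n
  · exact congrFun h 5
  · exact congrFun h 6
  · exact congrFun h 7

theorem stmt9 (S : Matrix (Fin 2) (Fin 3) ℂ) (V : ℕ) (A : Matrix (Fin 8) (Fin V) ℂ)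
    (s : Finset (Fin V)) (hs : s.card = 8) :
    ¬ LinearIndependent ℂ
        (fun i : s => ((S ⊗ₖ (1 : Matrix (Fin 4) (Fin 4) ℂ)) * UpsilonI * A)ᵀ (i : Fin V)) := by
  intro hli
  set M := (S ⊗ₖ (1 : Matrix (Fin 4) (Fin 4) ℂ)) * UpsilonI
  have hrank : (M * A.submatrix id ((↑) : s → Fin V))ᵀ.rank = Fintype.card s :=
    LinearIndependent.rank_matrix hli
  rw [Matrix.rank_transpose, Fintype.card_coe, hs] at hrank
  have hle := Matrix.rank_mul_le_left M (A.submatrix id ((↑) : s → Fin V))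
  have hlt : M.rank < 8 := rank_kronecker_mul_UpsilonI_lt S
  omega
end

section
/- Let Υ_II be the 12×8 0/1 matrix defined by Υ_II[(n−1)·4+m, ℓ] = 1 if d_tx[n] + d_rx[m] = ℓ−1 and 0 otherwise, where (d_tx[1],d_tx[2],d_tx[3]) = (0,1,2) and (d_rx[1],d_rx[2],d_rx[3],d_rx[4]) = (0,1,3,5), and let S₀ ∈ ℂ^{2×3} have rows (1,0,1) and (0,1,0). Let z_1, …, z_V be pairwise distinct complex numbers with V ≥ 8 and let A ∈ ℂ^{8×V} have entries A[ℓ,i] = z_i^(ℓ−1). Then every set of 8 columns of B_II = (S₀ ⊗ I_4) Υ_II A is linearly independent; i.e., the Kruskal rank of B_II equals 8. -/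
open Matrix Kronecker

/-- Every monomial exponent of the sum co-array is recovered from the waveform-filtered
redundancy pattern. -/
theorem S₀_kronecker_mul_UpsilonII_mulVec_injective :
    Function.Injective
      ((S₀ ⊗ₖ (1 : Matrix (Fin 4) (Fin 4) ℂ)) * UpsilonII).mulVec := by
  rw [← Matrix.coe_mulVecLin, ← LinearMap.ker_eq_bot, LinearMap.ker_eq_bot']
  intro x hx
  rw [Matrix.mulVecLin_apply, ← Matrix.mulVec_mulVec] at hx
  have row (a : Fin 2) (m : Fin 4) :
      ∑ n, S₀ a n * (UpsilonII *ᵥ x) (n, m) = 0 := by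
    simpa [Matrix.mulVec, dotProduct, Fintype.sum_prod_type, Matrix.one_apply]
      using congrFun hx (a, m)
  have e00 := row 0 0
  have e01 := row 0 1
  have e02 := row 0 2
  have e03 := row 0 3
  have e10 := row 1 0
  have e11 := row 1 1
  have e12 := row 1 2
  have e13 := row 1 3
  simp [S₀, UpsilonII, Matrix.mulVec, dotProduct, dtx, drxII, Fin.sum_univ_succ]
    at e00 e01 e02 e03 e10 e11 e12 e13
  ext i
  fin_cases i <;> simp_all

/-- Any `n` Vandermonde columns of height `n` with distinct nodes are linearly independent. -/
theorem linearIndependent_pow_of_card_eq {K ι : Type*} [Field K] [Fintype ι] {n : ℕ}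
    (hcard : Fintype.card ι = n) {z : ι → K} (hz : Function.Injective z) :
    LinearIndependent K (fun i (ℓ : Fin n) => z i ^ (ℓ : ℕ)) := by
  let e := Fintype.equivFinOfCardEq hcard
  rw [← linearIndependent_equiv e.symm]
  exact Matrix.linearIndependent_rows_of_det_ne_zero
    (Matrix.det_vandermonde_ne_zero_iff.mpr (hz.comp e.symm.injective))

theorem stmt10 (V : ℕ) (hV : 8 ≤ V)
    (z : Fin V → ℂ) (hz : Function.Injective z)
    (A : Matrix (Fin 8) (Fin V) ℂ)
    (hA : ∀ (ℓ : Fin 8) (i : Fin V), A ℓ i = z i ^ (ℓ : ℕ)) :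
    ∀ s : Finset (Fin V), s.card = 8 →
      LinearIndependent ℂ
        (fun i : s => ((S₀ ⊗ₖ (1 : Matrix (Fin 4) (Fin 4) ℂ)) * UpsilonII * A)ᵀ (i : Fin V)) := by
  intro s hs
  have hcols : LinearIndependent ℂ (fun i : s => Aᵀ (i : Fin V)) := by
    have hpow := linearIndependent_pow_of_card_eq (K := ℂ) (ι := s) (n := 8) (by simpa using hs)
      (hz.comp Subtype.val_injective)
    have hA' : (fun i : s => Aᵀ (i : Fin V)) =
        fun (i : s) (ℓ : Fin 8) => z i ^ (ℓ : ℕ) := by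
      ext i ℓ
      exact hA ℓ i
    rw [hA']
    exact hpow
  exact hcols.map' (Matrix.mulVecLin _)
    (LinearMap.ker_eq_bot.mpr S₀_kronecker_mul_UpsilonII_mulVec_injective)
end

section
/- Let Υ_I be the 12×8 0/1 matrix defined by Υ_I[(n−1)·4+m, ℓ] = 1 if d_tx[n] + d_rx[m] = ℓ−1 and 0 otherwise, where (d_tx[1],d_tx[2],d_tx[3]) = (0,1,2) and (d_rx[1],d_rx[2],d_rx[3],d_rx[4]) = (0,1,2,5). Then for every S ∈ ℂ^{2×3} and every A ∈ ℂ^{8×V} with V ≥ 8, there exist vectors x, z ∈ ℂ^V with x ≠ z, each having at most 4 nonzero entries, such that (S ⊗ I_4) Υ_I A x = (S ⊗ I_4) Υ_I A z. -/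
open Matrix Kronecker

/-- A nonzero kernel vector supported on the first `2 * k` coordinates splits into two distinct
`k`-sparse vectors with the same image. -/
theorem exists_sparse_ne_mulVec_eq {m : Type*} {V k : ℕ} (M : Matrix m (Fin V) ℂ)
    (w : Fin V → ℂ) (hw : w ≠ 0) (hsupp : ∀ i : Fin V, 2 * k ≤ (i : ℕ) → w i = 0)
    (hM : M *ᵥ w = 0) :
    ∃ x z : Fin V → ℂ, x ≠ z ∧
      (Finset.univ.filter fun i => x i ≠ 0).card ≤ k ∧
      (Finset.univ.filter fun i => z i ≠ 0).card ≤ k ∧ M *ᵥ x = M *ᵥ z := by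
  let x : Fin V → ℂ := fun i => if (i : ℕ) < k then w i else 0
  have hcard (y : Fin V → ℂ) (a : ℕ) (h : ∀ i, y i ≠ 0 → (i : ℕ) ∈ Finset.Ico a (a + k)) :
      (Finset.univ.filter fun i => y i ≠ 0).card ≤ k := by
    have := Finset.card_le_card_of_injOn (s := Finset.univ.filter fun i => y i ≠ 0)
      (t := Finset.Ico a (a + k)) (fun i : Fin V => (i : ℕ))
      (fun i hi => h i (by simpa using hi)) (fun i _ j _ hij => Fin.ext hij)
    simpa using this
  refine ⟨x, x - w, ?_, hcard _ 0 fun i hi => ?_, hcard _ k fun i hi => ?_, ?_⟩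
  · exact fun h => hw (sub_eq_self.mp h.symm)
  · by_contra h
    simp_all [x]
  · rw [Finset.mem_Ico]
    by_contra h
    by_cases hik : (i : ℕ) < k
    · simp [x, hik] at hi
    · simp [x, hik, hsupp i (by omega)] at hi
  · rw [mulVec_sub, hM, sub_zero]

/-- Any waveform matrix with fewer pulses than transmitters annihilates a nonzero signal on the
virtual array. -/
theorem exists_ne_zero_kronecker_mul_UpsilonI_mulVec_eq_zero (S : Matrix (Fin 2) (Fin 3) ℂ) :
    ∃ v : Fin 8 → ℂ, v ≠ 0 ∧
      ((S ⊗ₖ (1 : Matrix (Fin 4) (Fin 4) ℂ)) * UpsilonI) *ᵥ v = 0 := by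
  obtain ⟨c, hc, hc0⟩ := Submodule.exists_mem_ne_zero_of_ne_bot
    (LinearMap.ker_ne_bot_of_finrank_lt (f := S.mulVecLin) (by simp))
  refine ⟨![0, 0, 0, 0, 0, c 0, c 1, c 2], fun h => hc0 ?_, ?_⟩
  · ext n
    fin_cases n
    · simpa using congrFun h 5
    · simpa using congrFun h 6
    · simpa using congrFun h 7
  · have hS (i : Fin 2) : S i 0 * c 0 + S i 1 * c 1 + S i 2 * c 2 = 0 := by
      simpa [mulVec, dotProduct, Fin.sum_univ_three] using congrFun hc i
    have hU : UpsilonI *ᵥ ![0, 0, 0, 0, 0, c 0, c 1, c 2] =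
        fun p : Fin 3 × Fin 4 => if p.2 = 3 then c p.1 else 0 := by
      ext ⟨n, m⟩
      fin_cases n <;> fin_cases m <;>
        simp [UpsilonI, dtx, drxI, mulVec, dotProduct, Fin.sum_univ_eight]
    rw [← mulVec_mulVec, hU]
    ext ⟨i, m⟩
    by_cases hm : m = 3
    · subst hm
      simpa [mulVec, dotProduct, Fintype.sum_prod_type, Fin.sum_univ_three, one_apply] using hS i
    · simp [mulVec, dotProduct, Fintype.sum_prod_type, one_apply, hm]

/-- If `M` has a nonzero kernel vector, so does `M * B` for every square matrix `B`. -/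
theorem exists_ne_zero_mul_mulVec_eq_zero {m n : Type*} [Fintype n]
    (M : Matrix m n ℂ) (B : Matrix n n ℂ) (h : ∃ v, v ≠ 0 ∧ M *ᵥ v = 0) :
    ∃ u, u ≠ 0 ∧ M *ᵥ (B *ᵥ u) = 0 := by
  obtain ⟨v, hv, hMv⟩ := h
  by_cases hB : Function.Injective B.mulVecLin
  · obtain ⟨u, hu⟩ := LinearMap.injective_iff_surjective.mp hB v
    rw [mulVecLin_apply] at hu
    refine ⟨u, ?_, by rw [hu, hMv]⟩
    rintro rfl
    exact hv (by simpa using hu.symm)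
  · rw [← LinearMap.ker_eq_bot] at hB
    obtain ⟨u, hu, hu0⟩ := Submodule.exists_mem_ne_zero_of_ne_bot hB
    rw [LinearMap.mem_ker, mulVecLin_apply] at hu
    exact ⟨u, hu0, by rw [hu, mulVec_zero]⟩

theorem stmt11 (S : Matrix (Fin 2) (Fin 3) ℂ) (V : ℕ) (hV : 8 ≤ V)
    (A : Matrix (Fin 8) (Fin V) ℂ) :
    ∃ x z : Fin V → ℂ, x ≠ z ∧
      (Finset.univ.filter fun i => x i ≠ 0).card ≤ 4 ∧
      (Finset.univ.filter fun i => z i ≠ 0).card ≤ 4 ∧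
      ((S ⊗ₖ (1 : Matrix (Fin 4) (Fin 4) ℂ)) * UpsilonI * A) *ᵥ x =
        ((S ⊗ₖ (1 : Matrix (Fin 4) (Fin 4) ℂ)) * UpsilonI * A) *ᵥ z := by
  obtain ⟨u, hu0, hu⟩ := exists_ne_zero_mul_mulVec_eq_zero _ (A.submatrix id (Fin.castLE hV))
    (exists_ne_zero_kronecker_mul_UpsilonI_mulVec_eq_zero S)
  have hinj : Function.Injective (Fin.castLE hV) := Fin.castLE_injective hV
  let w : Fin V → ℂ := Function.extend (Fin.castLE hV) u 0
  have hw (j : Fin 8) : w (Fin.castLE hV j) = u j := hinj.extend_apply u 0 j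
  have hw' (i : Fin V) (hi : i ∉ Set.range (Fin.castLE hV)) : w i = 0 :=
    Function.extend_apply' u (0 : Fin V → ℂ) i hi
  have hAw : A *ᵥ w = A.submatrix id (Fin.castLE hV) *ᵥ u := by
    ext k
    rw [mulVec, mulVec, dotProduct, dotProduct]
    refine (Fintype.sum_of_injective _ hinj _ _ (fun i hi => ?_) fun j => ?_).symm
    · rw [hw' i hi, mul_zero]
    · rw [hw, submatrix_apply, id]
  refine exists_sparse_ne_mulVec_eq _ w (fun h => hu0 ?_) (fun i hi => hw' i ?_) ?_
  · ext j
    rw [← hw j, h, Pi.zero_apply, Pi.zero_apply]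
  · rintro ⟨j, rfl⟩
    simp only [Fin.val_castLE] at hi
    omega
  · rw [← mulVec_mulVec, hAw, hu]
end

section
/- Let Υ_II be the 12×8 0/1 matrix defined by Υ_II[(n−1)·4+m, ℓ] = 1 if d_tx[n] + d_rx[m] = ℓ−1 and 0 otherwise, where (d_tx[1],d_tx[2],d_tx[3]) = (0,1,2) and (d_rx[1],d_rx[2],d_rx[3],d_rx[4]) = (0,1,3,5), and let S₀ ∈ ℂ^{2×3} have rows (1,0,1) and (0,1,0). Let z_1, …, z_V be pairwise distinct complex numbers and let A ∈ ℂ^{8×V} have entries A[ℓ,i] = z_i^(ℓ−1). Then for all vectors x, z ∈ ℂ^V each having at most 4 nonzero entries, (S₀ ⊗ I_4) Υ_II A x = (S₀ ⊗ I_4) Υ_II A z implies x = z. -/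
open Matrix Kronecker

/-- The spatial compression `(S₀ ⊗ I₄) Υ_II` has trivial kernel. -/
theorem eq_zero_of_kronecker_mul_UpsilonII_mulVec_eq_zero (u : Fin 8 → ℂ)
    (hu : ((S₀ ⊗ₖ (1 : Matrix (Fin 4) (Fin 4) ℂ)) * UpsilonII) *ᵥ u = 0) : u = 0 := by
  have key (m : Fin 4) : (∑ ℓ : Fin 8, UpsilonII (0, m) ℓ * u ℓ) +
      ∑ ℓ : Fin 8, UpsilonII (2, m) ℓ * u ℓ = 0 ∧
      ∑ ℓ : Fin 8, UpsilonII (1, m) ℓ * u ℓ = 0 := by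
    rw [← mulVec_mulVec] at hu
    have h0 := congrFun hu (0, m)
    have h1 := congrFun hu (1, m)
    simp only [mulVec, dotProduct, kroneckerMap_apply, Fintype.sum_prod_type, one_apply, S₀,
      mul_ite, ite_mul, mul_one, mul_zero, zero_mul, Finset.sum_ite_eq, Finset.mem_univ, if_true,
      Pi.zero_apply, Fin.sum_univ_three] at h0 h1
    exact ⟨by simpa using h0, by simpa using h1⟩
  have k0 := key 0
  have k1 := key 1
  have k2 := key 2
  have k3 := key 3
  simp [UpsilonII, dtx, drxII, Fin.sum_univ_eight] at k0 k1 k2 k3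
  ext ℓ
  fin_cases ℓ <;> simp <;> grind

/-- A vector supported on at most `n` distinct nodes whose first `n` moments vanish is zero. -/
theorem eq_zero_of_sum_mul_pow_eq_zero {ι K : Type*} [Fintype ι] [Field K] [DecidableEq K]
    {n : ℕ} {z : ι → K} (hz : Function.Injective z) {w : ι → K}
    (hw : (Finset.univ.filter fun i => w i ≠ 0).card ≤ n)
    (h : ∀ k < n, ∑ i, w i * z i ^ k = 0) : w = 0 := by
  classical
  by_contra hne
  obtain ⟨i, hi⟩ := Function.ne_iff.mp hne
  set s := Finset.univ.filter fun i => w i ≠ 0 with hs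
  have his : i ∈ s := by simpa [hs] using hi
  set P : Polynomial K := ∏ j ∈ s.erase i, (Polynomial.X - Polynomial.C (z j)) with hP
  have hdeg : P.natDegree < n := by
    rw [hP, Polynomial.natDegree_finsetProd_X_sub_C_eq_card, Finset.card_erase_of_mem his]
    have := Finset.card_pos.mpr ⟨i, his⟩
    omega
  have hsum : ∑ j, w j * P.eval (z j) = 0 := by
    simp_rw [Polynomial.eval_eq_sum_range' hdeg, Finset.mul_sum]
    rw [Finset.sum_comm]
    refine Finset.sum_eq_zero fun k hk => ?_
    simp_rw [mul_left_comm (w _)]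
    rw [← Finset.mul_sum, h k (Finset.mem_range.mp hk), mul_zero]
  rw [Finset.sum_eq_single i _ (by simp)] at hsum
  · refine mul_ne_zero hi ?_ hsum
    rw [hP, Polynomial.eval_prod, Finset.prod_ne_zero_iff]
    intro j hj
    simpa [sub_eq_zero] using hz.ne (Finset.ne_of_mem_erase hj).symm
  · intro j _ hji
    by_cases hj : w j = 0
    · rw [hj, zero_mul]
    · have hjs : j ∈ s.erase i := Finset.mem_erase.mpr ⟨hji, by simpa [hs] using hj⟩
      rw [hP, Polynomial.eval_prod, Finset.prod_eq_zero hjs (by simp), mul_zero]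

theorem stmt12 (V : ℕ) (z : Fin V → ℂ) (hz : Function.Injective z)
    (A : Matrix (Fin 8) (Fin V) ℂ)
    (hA : ∀ (ℓ : Fin 8) (i : Fin V), A ℓ i = z i ^ (ℓ : ℕ))
    (x y : Fin V → ℂ)
    (hx : (Finset.univ.filter fun i => x i ≠ 0).card ≤ 4)
    (hy : (Finset.univ.filter fun i => y i ≠ 0).card ≤ 4)
    (h : ((S₀ ⊗ₖ (1 : Matrix (Fin 4) (Fin 4) ℂ)) * UpsilonII * A) *ᵥ x =
          ((S₀ ⊗ₖ (1 : Matrix (Fin 4) (Fin 4) ℂ)) * UpsilonII * A) *ᵥ y) :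
    x = y := by
  have hu : A *ᵥ (x - y) = 0 := by
    apply eq_zero_of_kronecker_mul_UpsilonII_mulVec_eq_zero
    rw [mulVec_mulVec, mulVec_sub, h, sub_self]
  have hcard : (Finset.univ.filter fun i => (x - y) i ≠ 0).card ≤ 8 := by
    calc _ ≤ ((Finset.univ.filter fun i => x i ≠ 0) ∪
          Finset.univ.filter fun i => y i ≠ 0).card := by
          refine Finset.card_le_card fun i hi => ?_
          simp only [Finset.mem_union, Finset.mem_filter, Finset.mem_univ, true_and,
            Pi.sub_apply] at hi ⊢
          by_contra! hxy
          exact hi (by rw [hxy.1, hxy.2, sub_zero])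
      _ ≤ _ := (Finset.card_union_le _ _).trans (add_le_add hx hy)
  refine sub_eq_zero.mp (eq_zero_of_sum_mul_pow_eq_zero hz hcard fun k hk => ?_)
  simpa [mulVec, dotProduct, hA, mul_comm] using congrFun hu ⟨k, hk⟩
end

section
/- Let S ∈ ℂ^{T×N_tx} have rank N_tx, let Υ ∈ ℂ^{N_tx N_rx × N_Σ} be a 0/1 matrix in which every row has exactly one entry equal to 1 and every column has at least one entry equal to 1, and let A ∈ ℂ^{N_Σ×V} be such that every set of N_Σ columns of A is linearly independent. Then every set of N_Σ columns of B = (S ⊗ I_{N_rx}) Υ A is linearly independent; i.e., the Kruskal rank of B equals its maximal value N_Σ. -/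
open Matrix Kronecker

/-- A matrix over a field whose rank is its number of columns has a left inverse. -/
theorem Matrix.exists_left_inverse_of_rank_eq_card {K m n : Type*} [Field K] [Fintype m]
    [DecidableEq m] [Fintype n] [DecidableEq n] {S : Matrix m n K}
    (hS : S.rank = Fintype.card n) : ∃ L : Matrix n m K, L * S = 1 := by
  have hind : LinearIndependent K S.col := by
    rw [linearIndependent_iff_card_eq_finrank_span, ← hS, S.rank_eq_finrank_span_cols]
    rfl
  obtain ⟨g, hg⟩ := (Matrix.toLin' S).exists_leftInverse_of_injective
    (LinearMap.ker_eq_bot.2 (Matrix.mulVec_injective_iff.2 hind))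
  exact ⟨LinearMap.toMatrix' g, by
    rw [← LinearMap.toMatrix'_toLin' S, ← LinearMap.toMatrix'_comp, hg, LinearMap.toMatrix'_id]⟩

/-- A 0/1 matrix with at most one `1` per row and at least one `1` per column has a left
inverse, obtained by selecting one row for each column. -/
theorem Matrix.exists_left_inverse_of_zero_one {R m n : Type*} [Semiring R] [Fintype m]
    [DecidableEq m] [DecidableEq n] {Υ : Matrix m n R} (h01 : ∀ r ℓ, Υ r ℓ = 0 ∨ Υ r ℓ = 1)
    (hrow : ∀ r ℓ ℓ', Υ r ℓ = 1 → Υ r ℓ' = 1 → ℓ = ℓ') (hcol : ∀ ℓ, ∃ r, Υ r ℓ = 1) :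
    ∃ P : Matrix n m R, P * Υ = 1 := by
  choose f hf using hcol
  refine ⟨Matrix.of fun ℓ r => if f ℓ = r then 1 else 0, ?_⟩
  ext ℓ ℓ'
  simp only [Matrix.mul_apply, Matrix.of_apply, ite_mul, one_mul, zero_mul, Finset.sum_ite_eq,
    Finset.mem_univ, if_true, Matrix.one_apply]
  split_ifs with h
  · exact h ▸ hf ℓ
  · exact (h01 (f ℓ) ℓ').resolve_right fun h' => h (hrow _ _ _ (hf ℓ) h')

/-- Left multiplication by a left-invertible matrix preserves linear independence of columns. -/
theorem Matrix.linearIndependent_transpose_mul_of_left_inverse {K m n o ι : Type*} [Field K]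
    [Fintype m] [Fintype n] [DecidableEq n] {L : Matrix n m K} {M : Matrix m n K} (h : L * M = 1)
    {A : Matrix n o K} {c : ι → o} (hA : LinearIndependent K fun i => Aᵀ (c i)) :
    LinearIndependent K fun i => (M * A)ᵀ (c i) := by
  refine LinearIndependent.of_comp L.mulVecLin ?_
  have hcomp : (L.mulVecLin ∘ fun i => (M * A)ᵀ (c i)) = fun i => Aᵀ (c i) := by
    funext i
    change (L * (M * A))ᵀ (c i) = _
    rw [← Matrix.mul_assoc, h, Matrix.one_mul]
  rwa [hcomp]

theorem stmt13 (T Ntx Nrx Nsum V : ℕ)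
    (S : Matrix (Fin T) (Fin Ntx) ℂ) (hS : S.rank = Ntx)
    (Υ : Matrix (Fin Ntx × Fin Nrx) (Fin Nsum) ℂ)
    (hΥ01 : ∀ r ℓ, Υ r ℓ = 0 ∨ Υ r ℓ = 1)
    (hrow : ∀ r, ∃! ℓ, Υ r ℓ = 1)
    (hcol : ∀ ℓ, ∃ r, Υ r ℓ = 1)
    (A : Matrix (Fin Nsum) (Fin V) ℂ)
    (hA : ∀ s : Finset (Fin V), s.card = Nsum →
        LinearIndependent ℂ (fun i : s => Aᵀ (i : Fin V))) :
    ∀ s : Finset (Fin V), s.card = Nsum →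
      LinearIndependent ℂ
        (fun i : s => ((S ⊗ₖ (1 : Matrix (Fin Nrx) (Fin Nrx) ℂ)) * Υ * A)ᵀ (i : Fin V)) := by
  intro s hs
  obtain ⟨L, hL⟩ := Matrix.exists_left_inverse_of_rank_eq_card (hS.trans (Fintype.card_fin _).symm)
  obtain ⟨P, hP⟩ := Matrix.exists_left_inverse_of_zero_one hΥ01
    (fun r _ _ h h' => (hrow r).unique h h') hcol
  refine Matrix.linearIndependent_transpose_mul_of_left_inverse
    (L := P * (L ⊗ₖ (1 : Matrix (Fin Nrx) (Fin Nrx) ℂ))) ?_ (hA s hs)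
  rw [Matrix.mul_assoc, ← Matrix.mul_assoc (L ⊗ₖ _), ← Matrix.mul_kronecker_mul, hL,
    Matrix.one_mul, Matrix.one_kronecker_one, Matrix.one_mul, hP]
end
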